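/- Equivalence of the primal and dual forms of the discrete momentum equation: assume H is invertible and D̄₁ I = H D̄₁, where D̄₁ = −D₂ᵀ. Let U : ℝ → (E → ℝ) be differentiable, define Û(t) := H⁻¹.mulVec (M.mulVec (U t)) (so M U = H Û for all t), and let Q⊥, Q̂⊥ : ℝ → (E → ℝ) and S : ℝ → (C → ℝ), Ŝ : ℝ → (C → ℝ) satisfy M.mulVec (Q⊥ t) = H.mulVec (Q̂⊥ t) and L.mulVec (S t) = I.mulVec (Ŝ t) for all t. Then the primal momentum equation M.mulVec (U' t) + M.mulVec (Q⊥ t) + D̄₁.mulVec (L.mulVec (S t)) = 0 holds for all t if and only if the dual-space form Û'(t) + Q̂⊥ t + D̄₁.mulVec (Ŝ t) = 0 holds for all t. -/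

import Mathlib

open Matrix

theorem inv_mulVec_eq_iff_eq_mulVec {n R : Type*} [Fintype n] [DecidableEq n] [CommRing R]
    {A : Matrix n n R} (hA : IsUnit A.det) {v w : n → R} :
    A⁻¹ *ᵥ v = w ↔ v = A *ᵥ w := by
  constructor
  · rintro rfl
    rw [mulVec_mulVec, mul_nonsing_inv A hA, one_mulVec]
  · rintro rfl
    rw [mulVec_mulVec, nonsing_inv_mul A hA, one_mulVec]

theorem mulVec_mulVec_congr_of_mul_eq_mul {l m m' n R : Type*} [Fintype m] [Fintype m']
    [Fintype n] [NonUnitalSemiring R] {A : Matrix l m R} {B : Matrix m n R}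
    {A' : Matrix l m' R} {B' : Matrix m' n R} (h : A * B = A' * B') (v : n → R) :
    A *ᵥ (B *ᵥ v) = A' *ᵥ (B' *ᵥ v) := by
  rw [mulVec_mulVec, h, ← mulVec_mulVec]

section Derivative

variable {𝕜 : Type*} [NontriviallyNormedField 𝕜]

theorem hasDerivAt_const_mulVec {m n R : Type*} [Finite m] [Fintype n]
    [NormedRing R] [NormedAlgebra 𝕜 R] (A : Matrix m n R) {f : 𝕜 → n → R} {f' : n → R} {t : 𝕜}
    (hf : HasDerivAt f f' t) : HasDerivAt (fun s => A *ᵥ f s) (A *ᵥ f') t := by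
  cases nonempty_fintype m
  exact hasDerivAt_pi.2 fun i =>
    HasDerivAt.fun_sum fun j _ => (hasDerivAt_pi.1 hf j).const_mul (A i j)

theorem hasDerivAt_iff_eq_of_hasDerivAt {F : Type*} [NormedAddCommGroup F] [NormedSpace 𝕜 F]
    {f : 𝕜 → F} {f' g' : F} {t : 𝕜} (hf : HasDerivAt f f' t) : HasDerivAt f g' t ↔ f' = g' :=
  ⟨hf.unique, hf.congr_deriv⟩

theorem primal_dual_momentum_equivalence_general
    {R C C₁ C₂ E E₁ : Type*} [NormedCommRing R] [NormedAlgebra 𝕜 R]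
    [Fintype C] [Fintype C₁] [Fintype C₂] [Fintype E] [Fintype E₁] [DecidableEq E]
    {D : Matrix E C R} {Dhat : Matrix E C₂ R} {L : Matrix C C₁ R} {I : Matrix C C₂ R}
    {M : Matrix E E₁ R} {H : Matrix E E R}
    (hH : IsUnit H.det) (hDI : D * I = H * Dhat)
    {U : 𝕜 → E₁ → R} {Ud : E₁ → R} {t : 𝕜} (hU : HasDerivAt U Ud t)
    {Qperp : E₁ → R} {Qhatperp : E → R} (hQ : M *ᵥ Qperp = H *ᵥ Qhatperp)
    {S : C₁ → R} {Shat : C₂ → R} (hS : L *ᵥ S = I *ᵥ Shat) :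
    M *ᵥ Ud + M *ᵥ Qperp + D *ᵥ (L *ᵥ S) = 0 ↔
      HasDerivAt (fun s => H⁻¹ *ᵥ (M *ᵥ U s)) (-Qhatperp - Dhat *ᵥ Shat) t := by
  have hUhat : HasDerivAt (fun s => H⁻¹ *ᵥ (M *ᵥ U s)) (H⁻¹ *ᵥ (M *ᵥ Ud)) t :=
    hasDerivAt_const_mulVec H⁻¹ (hasDerivAt_const_mulVec M hU)
  have hgrad : D *ᵥ (L *ᵥ S) = H *ᵥ (Dhat *ᵥ Shat) := by
    rw [hS, mulVec_mulVec_congr_of_mul_eq_mul hDI]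
  calc M *ᵥ Ud + M *ᵥ Qperp + D *ᵥ (L *ᵥ S) = 0
      ↔ M *ᵥ Ud = H *ᵥ (-Qhatperp - Dhat *ᵥ Shat) := by
        rw [hQ, hgrad, add_assoc, add_eq_zero_iff_eq_neg, ← mulVec_add, ← mulVec_neg, neg_add']
    _ ↔ H⁻¹ *ᵥ (M *ᵥ Ud) = -Qhatperp - Dhat *ᵥ Shat := (inv_mulVec_eq_iff_eq_mulVec hH).symm
    _ ↔ HasDerivAt (fun s => H⁻¹ *ᵥ (M *ᵥ U s)) (-Qhatperp - Dhat *ᵥ Shat) t :=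
        (hasDerivAt_iff_eq_of_hasDerivAt hUhat).symm

end Derivative

/-- Equivalence of the primal and dual forms of the discrete momentum
equation: assuming `H` invertible and `D̄₁ I = H D̄₁` (with `D̄₁ = -D₂ᵀ`),
with `Û = H⁻¹ M U`, `M Q⊥ = H Q̂⊥` and `L S = I Ŝ`, the primal momentum
equation `M U' + M Q⊥ + D̄₁ L S = 0` holds for all times if and only if
the equivalent dual-space form `Û' + Q̂⊥ + D̄₁ Ŝ = 0` holds for all times. -/
theorem primal_dual_momentum_equivalence
    {C E : Type*} [Fintype C] [Fintype E] [DecidableEq E]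
    (D₂ : Matrix C E ℝ) (L I : Matrix C C ℝ) (M H : Matrix E E ℝ)
    (hH : IsUnit H.det) (hDI : (-D₂ᵀ) * I = H * (-D₂ᵀ))
    (U : ℝ → E → ℝ) (Ud : ℝ → E → ℝ)
    (Qperp Qhatperp : ℝ → E → ℝ) (S Shat : ℝ → C → ℝ)
    (hUdiff : ∀ t : ℝ, HasDerivAt U (Ud t) t)
    (hQ : ∀ t : ℝ, M.mulVec (Qperp t) = H.mulVec (Qhatperp t))
    (hS : ∀ t : ℝ, L.mulVec (S t) = I.mulVec (Shat t)) :
    (∀ t : ℝ, M.mulVec (Ud t) + M.mulVec (Qperp t) +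
        (-D₂ᵀ).mulVec (L.mulVec (S t)) = 0) ↔
    (∀ t : ℝ, HasDerivAt (fun s : ℝ => H⁻¹.mulVec (M.mulVec (U s)))
        (-(Qhatperp t) - (-D₂ᵀ).mulVec (Shat t)) t) :=
  forall_congr' fun t =>
    primal_dual_momentum_equivalence_general hH hDI (hUdiff t) (hQ t) (hS t)
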